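/- arXiv:2604.23439 — 2 statements merged into one kernel-verified Lean document; each statement's English description precedes it below -/
import Mathlib

section
/- For every station k, every t, every fixed strategy γ^{-k} of the other stations, and any two strategies γ^k and γ̃^k of station k, if the realization I_t^k = i_t^k has positive probability under both (γ^k, γ^{-k}) and (γ̃^k, γ^{-k}), then ℙ^{γ^k,γ^{-k}}(X_t = x_t, Λ_t^{-k} = λ_t^{-k} | I_t^k = i_t^k) = ℙ^{γ̃^k,γ^{-k}}(X_t = x_t, Λ_t^{-k} = λ_t^{-k} | I_t^k = i_t^k) for all (x_t, λ_t^{-k}); i.e., the kth private posterior Ξ_t^k[i_t^k] depends on the realized actions u_{1,t}^k contained in i_t^k but not on the strategy γ^k that generated them. -/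
/-!
Decentralized stochastic network with `T`-step delayed sharing information patterns
(canonical finite-path-space formalization).

Times are 0-based: the paper's horizon `{1,…,n}` is encoded as `{0,…,n}` here
(so the paper's terminal time `n` is `n`, and paper time `t` corresponds to index `t-1`).

The sample space is the (finite) space of state/observation trajectories; given a
strategy profile the actions are determined recursively, and the probability of a
trajectory is the product of the Markovian kernels.  All posteriors (the private
posterior `Ξ` and the centralized posteriors `Π`, `Θ`) are elementary conditional
probabilities on this finite space.
-/

open Finset
open scoped BigOperators Classical

namespace DelayedSharing

/-- Canonical sample space: trajectories of states and observations over times `0,…,n`. -/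
abbrev Traj (n : ℕ) (X : Type) {K : ℕ} (Y : Fin K → Type) : Type :=
  (Fin (n + 1) → X) × (Fin (n + 1) → ∀ k, Y k)

/-- Clamped index into the horizon `{0,…,n}`. -/
def idx (n t : ℕ) : Fin (n + 1) := ⟨min t n, Nat.lt_succ_of_le (Nat.min_le_right t n)⟩

/-- A strategy profile: station `k`'s map, at each time, from full observation/action
histories to an action in the action space `U k`.  Admissibility (below) restricts the
dependence to the `T`-step delayed sharing information pattern `I_t^k`. -/
abbrev Strat {K : ℕ} (Y U : Fin K → Type) : Type :=
  ∀ k : Fin K, ℕ → (ℕ → ∀ j, Y j) → (ℕ → ∀ j, U j) → U k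

/-- A strategy of the single station `k`. -/
abbrev SStrat {K : ℕ} (Y U : Fin K → Type) (k : Fin K) : Type :=
  ℕ → (ℕ → ∀ j, Y j) → (ℕ → ∀ j, U j) → U k

variable {X : Type} {K : ℕ} {Y U : Fin K → Type}

def stateAt {n : ℕ} (ω : Traj n X Y) (t : ℕ) : X := ω.1 (idx n t)

def obsAt {n : ℕ} (ω : Traj n X Y) (t : ℕ) (k : Fin K) : Y k := ω.2 (idx n t) k

/-- `γ` is admissible for the `T`-step delayed sharing pattern: `γ k t` depends only on
`I_t^k = {Δ_t^{(K)}, Λ_t^k}`, i.e. on all stations' observations/actions up to time `t-T`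
(0-based: times `s` with `s + T ≤ t`), own observations up to `t` and own actions up to
`t-1`. -/
def Admissible (T : ℕ) (γ : Strat Y U) : Prop :=
  ∀ (k : Fin K) (t : ℕ) (y y' : ℕ → ∀ j, Y j) (u u' : ℕ → ∀ j, U j),
    (∀ s j, s + T ≤ t → y s j = y' s j) →
    (∀ s j, s + T ≤ t → u s j = u' s j) →
    (∀ s, s ≤ t → y s k = y' s k) →
    (∀ s, s < t → u s k = u' s k) →
    γ k t y u = γ k t y' u'

/-- Admissibility of a single station's strategy. -/
def SAdmissible (T : ℕ) (k : Fin K) (g : SStrat Y U k) : Prop :=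
  ∀ (t : ℕ) (y y' : ℕ → ∀ j, Y j) (u u' : ℕ → ∀ j, U j),
    (∀ s j, s + T ≤ t → y s j = y' s j) →
    (∀ s j, s + T ≤ t → u s j = u' s j) →
    (∀ s, s ≤ t → y s k = y' s k) →
    (∀ s, s < t → u s k = u' s k) →
    g t y u = g t y' u'

/-- Replace station `k`'s strategy in the profile `γ` by `g`. -/
def updStrat (γ : Strat Y U) (k : Fin K) (g : SStrat Y U k) : Strat Y U :=
  fun j => if h : j = k then (by subst h; exact g) else γ j

/-- Station `k` uses `g₁` before time `t` and `g₂` from time `t` on. -/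
def splice {k : Fin K} (g₁ g₂ : SStrat Y U k) (t : ℕ) : SStrat Y U k :=
  fun τ => if τ < t then g₁ τ else g₂ τ

variable [∀ k, Nonempty (U k)]

/-- The actions at times `< t` generated recursively by the strategy profile `γ` from the
observation path `y`. -/
noncomputable def actUpto (γ : Strat Y U) (y : ℕ → ∀ j, Y j) : ℕ → ℕ → ∀ j, U j
  | 0 => fun _ j => Classical.arbitrary (U j)
  | t + 1 => fun s => if s = t then (fun j => γ j t y (actUpto γ y t)) else actUpto γ y t s

/-- The action profile at time `t` generated by `γ` from the observation path `y`. -/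
noncomputable def act (γ : Strat Y U) (y : ℕ → ∀ j, Y j) (t : ℕ) : ∀ j, U j :=
  fun j => γ j t y (actUpto γ y t)

/-- The realized action profile along a trajectory. -/
noncomputable def actAt {n : ℕ} (γ : Strat Y U) (ω : Traj n X Y) (t : ℕ) : ∀ j, U j :=
  act γ (fun s => ω.2 (idx n s)) t

/-- The Markovian kernels and the per-stage cost of the decentralized network (0-based):
`prior` is the PMF of the initial state; `obs0 k` the PMF of station `k`'s initial
observation given the initial state; `trans t` the transition PMF from time `t` to `t+1`
given the action profile at time `t`; `obs t k` the PMF of station `k`'s observation at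
time `t+1` given the state at `t+1` and the action profile at time `t` (the observations
of the stations being conditionally independent given these); `cost t` the per-stage
cost `ℓ(t,·,·)`. -/
structure Kernels (X : Type) {K : ℕ} (Y U : Fin K → Type) where
  prior : X → ℝ
  obs0 : ∀ k : Fin K, X → Y k → ℝ
  trans : ℕ → X → (∀ j, U j) → X → ℝ
  obs : ℕ → ∀ k : Fin K, X → (∀ j, U j) → Y k → ℝ
  cost : ℕ → X → (∀ j, U j) → ℝ

variable [Fintype X] [∀ k, Fintype (Y k)]

/-- All the kernels are genuine probability mass functions. -/
def Kernels.IsPMF (M : Kernels X Y U) : Prop :=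
  (∀ x, 0 ≤ M.prior x) ∧ (∑ x, M.prior x) = 1 ∧
  (∀ (k : Fin K) x, (∀ y, 0 ≤ M.obs0 k x y) ∧ (∑ y, M.obs0 k x y) = 1) ∧
  (∀ t x u, (∀ x', 0 ≤ M.trans t x u x') ∧ (∑ x', M.trans t x u x') = 1) ∧
  (∀ t (k : Fin K) x u, (∀ y, 0 ≤ M.obs t k x u y) ∧ (∑ y, M.obs t k x u y) = 1)

/-- The probability of a trajectory under the strategy profile `γ`: the product of the
Markovian kernels along the path, the actions being generated by `γ`. -/
noncomputable def prob (n : ℕ) (M : Kernels X Y U) (γ : Strat Y U) (ω : Traj n X Y) : ℝ :=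
  M.prior (stateAt ω 0) * (∏ k, M.obs0 k (stateAt ω 0) (obsAt ω 0 k)) *
    ∏ t ∈ Finset.range n,
      (M.trans t (stateAt ω t) (actAt γ ω t) (stateAt ω (t + 1)) *
        ∏ k, M.obs t k (stateAt ω (t + 1)) (actAt γ ω t) (obsAt ω (t + 1) k))

/-- `ℙ^γ(A)` on the canonical finite path space. -/
noncomputable def Pr (n : ℕ) (M : Kernels X Y U) (γ : Strat Y U) (A : Traj n X Y → Prop) : ℝ :=
  ∑ ω : Traj n X Y, if A ω then prob n M γ ω else 0

/-- Conditional probability `ℙ^γ(A | B)`. -/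
noncomputable def condPr (n : ℕ) (M : Kernels X Y U) (γ : Strat Y U)
    (A B : Traj n X Y → Prop) : ℝ :=
  Pr n M γ (fun ω => A ω ∧ B ω) / Pr n M γ B

/-- The expected total cost `J_n(γ) = 𝔼^γ [Σ_t ℓ(t, X_t, U_t^{(K)})]`. -/
noncomputable def J (n : ℕ) (M : Kernels X Y U) (γ : Strat Y U) : ℝ :=
  ∑ ω : Traj n X Y, prob n M γ ω *
    ∑ t ∈ Finset.range (n + 1), M.cost t (stateAt ω t) (actAt γ ω t)

/-- The conditional cost-to-go from time `t` given the event `B`: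
`𝔼^γ [Σ_{τ=t}^n ℓ(τ, X_τ, U_τ^{(K)}) | B]`. -/
noncomputable def Jcond (n : ℕ) (M : Kernels X Y U) (γ : Strat Y U) (t : ℕ)
    (B : Traj n X Y → Prop) : ℝ :=
  (∑ ω : Traj n X Y,
      if B ω then prob n M γ ω * ∑ τ ∈ Finset.Icc t n, M.cost τ (stateAt ω τ) (actAt γ ω τ)
      else 0) / Pr n M γ B

/-- Person-by-person optimality of the profile `γo`. -/
noncomputable def PbPOptimal (n T : ℕ) (M : Kernels X Y U) (γo : Strat Y U) : Prop :=
  Admissible T γo ∧ ∀ (k : Fin K) (g : SStrat Y U k),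
    Admissible T (updStrat γo k g) → J n M γo ≤ J n M (updStrat γo k g)

/-- Person-by-person optimality of `γo` within the class `P` of strategy profiles. -/
noncomputable def PbPOptimalIn (n T : ℕ) (M : Kernels X Y U) (P : Strat Y U → Prop)
    (γo : Strat Y U) : Prop :=
  Admissible T γo ∧ P γo ∧ ∀ (k : Fin K) (g : SStrat Y U k),
    Admissible T (updStrat γo k g) → P (updStrat γo k g) →
      J n M γo ≤ J n M (updStrat γo k g)

/-! ### Information events: realizations of `I_t^k`, `Δ_t^{(K)}`, `Λ_t^k` -/

/-- The event `{I_t^k = i_t^k}`, where the realization `i_t^k = {δ_t^{(K)}, λ_t^k}` is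
recorded by total functions `iy, iu` (only the coordinates of the information pattern
matter). -/
def InfoEq {n : ℕ} (T : ℕ) (γ : Strat Y U) (k : Fin K) (t : ℕ)
    (iy : ℕ → ∀ j, Y j) (iu : ℕ → ∀ j, U j) (ω : Traj n X Y) : Prop :=
  (∀ s j, s + T ≤ t → obsAt ω s j = iy s j) ∧
  (∀ s j, s + T ≤ t → actAt γ ω s j = iu s j) ∧
  (∀ s, s ≤ t → obsAt ω s k = iy s k) ∧
  (∀ s, s < t → actAt γ ω s k = iu s k)

/-- The event `{Δ_t^{(K)} = δ_t^{(K)}}` (common/shared data). -/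
def CommonEq {n : ℕ} (T : ℕ) (γ : Strat Y U) (t : ℕ)
    (δy : ℕ → ∀ j, Y j) (δu : ℕ → ∀ j, U j) (ω : Traj n X Y) : Prop :=
  (∀ s j, s + T ≤ t → obsAt ω s j = δy s j) ∧
  (∀ s j, s + T ≤ t → actAt γ ω s j = δu s j)

/-- The event `{Λ_t^{-k} = λ_t^{-k}}` (private data of the other stations). -/
def PrivOthersEq {n : ℕ} (T : ℕ) (γ : Strat Y U) (k : Fin K) (t : ℕ)
    (ly : ℕ → ∀ j, Y j) (lu : ℕ → ∀ j, U j) (ω : Traj n X Y) : Prop :=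
  (∀ s j, j ≠ k → s ≤ t → t < s + T → obsAt ω s j = ly s j) ∧
  (∀ s j, j ≠ k → s < t → t < s + T → actAt γ ω s j = lu s j)

/-- The event `{Λ_t^{(K)} = λ_t^{(K)}}` (private data of all stations). -/
def PrivAllEq {n : ℕ} (T : ℕ) (γ : Strat Y U) (t : ℕ)
    (ly : ℕ → ∀ j, Y j) (lu : ℕ → ∀ j, U j) (ω : Traj n X Y) : Prop :=
  (∀ s j, s ≤ t → t < s + T → obsAt ω s j = ly s j) ∧
  (∀ s j, s < t → t < s + T → actAt γ ω s j = lu s j)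

/-- Agreement of two trajectories on the common data `Δ_t^{(K)}`. -/
def CommonAgree {n : ℕ} (T : ℕ) (γ : Strat Y U) (t : ℕ) (ω ω' : Traj n X Y) : Prop :=
  (∀ s (j : Fin K), s + T ≤ t → obsAt ω s j = obsAt ω' s j) ∧
  (∀ s (j : Fin K), s + T ≤ t → actAt γ ω s j = actAt γ ω' s j)

/-- Agreement of two trajectories on station `k`'s private data `Λ_t^k`. -/
def PrivAgree {n : ℕ} (T : ℕ) (γ : Strat Y U) (k : Fin K) (t : ℕ) (ω ω' : Traj n X Y) : Prop :=
  (∀ s, s ≤ t → t < s + T → obsAt ω s k = obsAt ω' s k) ∧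
  (∀ s, s < t → t < s + T → actAt γ ω s k = actAt γ ω' s k)

/-- Agreement of two trajectories on station `k`'s information `I_t^k`. -/
def InfoAgree {n : ℕ} (T : ℕ) (γ : Strat Y U) (k : Fin K) (t : ℕ) (ω ω' : Traj n X Y) : Prop :=
  CommonAgree T γ t ω ω' ∧
  (∀ s, s ≤ t → obsAt ω s k = obsAt ω' s k) ∧
  (∀ s, s < t → actAt γ ω s k = actAt γ ω' s k)

/-! ### Posteriors -/

/-- The private posterior `Ξ_t^k[i_t^k](x, λ_t^{-k})
 = ℙ^γ(X_t = x, Λ_t^{-k} = λ_t^{-k} | I_t^k = i_t^k)`. -/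
noncomputable def Xi (n T : ℕ) (M : Kernels X Y U) (γ : Strat Y U) (k : Fin K) (t : ℕ)
    (iy : ℕ → ∀ j, Y j) (iu : ℕ → ∀ j, U j) (x : X)
    (ly : ℕ → ∀ j, Y j) (lu : ℕ → ∀ j, U j) : ℝ :=
  condPr n M γ (fun ω => stateAt ω t = x ∧ PrivOthersEq T γ k t ly lu ω)
    (InfoEq T γ k t iy iu)

/-- The centralized posterior `Π_t^{(K)}[δ_t^{(K)}](x) = ℙ^γ(X_{t-T} = x | Δ_t^{(K)} = δ)`. -/
noncomputable def PiPost (n T : ℕ) (M : Kernels X Y U) (γ : Strat Y U) (t : ℕ)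
    (δy : ℕ → ∀ j, Y j) (δu : ℕ → ∀ j, U j) (x : X) : ℝ :=
  condPr n M γ (fun ω => stateAt ω (t - T) = x) (CommonEq T γ t δy δu)

/-- The centralized posterior
`Θ_t^{γ}[δ_t^{(K)}](x, λ_t^{(K)}) = ℙ^γ(X_t = x, Λ_t^{(K)} = λ | Δ_t^{(K)} = δ)`. -/
noncomputable def ThetaPost (n T : ℕ) (M : Kernels X Y U) (γ : Strat Y U) (t : ℕ)
    (δy : ℕ → ∀ j, Y j) (δu : ℕ → ∀ j, U j) (x : X)
    (ly : ℕ → ∀ j, Y j) (lu : ℕ → ∀ j, U j) : ℝ :=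
  condPr n M γ (fun ω => stateAt ω t = x ∧ PrivAllEq T γ t ly lu ω) (CommonEq T γ t δy δu)

/-- The realization `I_t^k = i_t^k` has positive probability under `γ`. -/
noncomputable def PosInfo (n T : ℕ) (M : Kernels X Y U) (γ : Strat Y U) (k : Fin K) (t : ℕ)
    (iy : ℕ → ∀ j, Y j) (iu : ℕ → ∀ j, U j) : Prop :=
  0 < Pr n M γ (InfoEq T γ k t iy iu)

/-- The random private posterior `Ξ_t^k[I_t^k]` evaluated along the trajectory `ω`. -/
noncomputable def XiAt (n T : ℕ) (M : Kernels X Y U) (γ : Strat Y U) (k : Fin K) (t : ℕ)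
    (ω : Traj n X Y) : X → (ℕ → ∀ j, Y j) → (ℕ → ∀ j, U j) → ℝ :=
  fun x ly lu => Xi n T M γ k t (fun s => ω.2 (idx n s)) (actAt γ ω) x ly lu

/-! ### Finite parametrization of private realizations -/

variable [∀ k, DecidableEq (Y k)] [∀ k, DecidableEq (U k)] [∀ k, Fintype (U k)]
variable [∀ k, Nonempty (Y k)]

/-- Canonical (finite) set of realizations of `Λ_t^{-k}`: pairs of functions supported on
the private windows of the stations `j ≠ k` (observations at times `s ≤ t` with
`t < s + T`; actions at times `s < t` with `t < s + T`) and equal to a fixed default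
outside. -/
noncomputable def privSet (n T : ℕ) (k : Fin K) (t : ℕ) :
    Finset ((Fin (n + 1) → ∀ j, Y j) × (Fin (n + 1) → ∀ j, U j)) :=
  Finset.univ.filter (fun p =>
    (∀ (s : Fin (n + 1)) (j : Fin K), ¬(j ≠ k ∧ s.1 ≤ t ∧ t < s.1 + T) →
        p.1 s j = Classical.arbitrary (Y j)) ∧
    (∀ (s : Fin (n + 1)) (j : Fin K), ¬(j ≠ k ∧ s.1 < t ∧ t < s.1 + T) →
        p.2 s j = Classical.arbitrary (U j)))

/-- Canonical (finite) set of realizations of `Λ_t^{(K)}` (all stations). -/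
noncomputable def privAllSet (n T t : ℕ) :
    Finset ((Fin (n + 1) → ∀ j, Y j) × (Fin (n + 1) → ∀ j, U j)) :=
  Finset.univ.filter (fun p =>
    (∀ (s : Fin (n + 1)) (j : Fin K), ¬(s.1 ≤ t ∧ t < s.1 + T) →
        p.1 s j = Classical.arbitrary (Y j)) ∧
    (∀ (s : Fin (n + 1)) (j : Fin K), ¬(s.1 < t ∧ t < s.1 + T) →
        p.2 s j = Classical.arbitrary (U j)))

/-- View the observation part of a private realization as a (ℕ-indexed) realization
function. -/
def pWinY {n : ℕ} (p : (Fin (n + 1) → ∀ j, Y j) × (Fin (n + 1) → ∀ j, U j)) :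
    ℕ → ∀ j, Y j := fun s => p.1 (idx n s)

/-- View the action part of a private realization as a realization function. -/
def pWinU {n : ℕ} (p : (Fin (n + 1) → ∀ j, Y j) × (Fin (n + 1) → ∀ j, U j)) :
    ℕ → ∀ j, U j := fun s => p.2 (idx n s)

/-- The observation history obtained by combining the realized information `iy` of
station `k` (own and common coordinates) with the private window `py` of the other
stations. -/
def mixObs {n : ℕ} (T t : ℕ) (k : Fin K) (iy : ℕ → ∀ j, Y j)
    (py : Fin (n + 1) → ∀ j, Y j) : ℕ → ∀ j, Y j :=
  fun s j => if j = k ∨ s + T ≤ t then iy s j else py (idx n s) j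

/-- The action history obtained by combining the realized information `iu` of station `k`
with the private window `pu` of the other stations. -/
def mixAct {n : ℕ} (T t : ℕ) (k : Fin K) (iu : ℕ → ∀ j, U j)
    (pu : Fin (n + 1) → ∀ j, U j) : ℕ → ∀ j, U j :=
  fun s j => if j = k ∨ s + T ≤ t then iu s j else pu (idx n s) j

/-- The action profile at time `t`: station `k` applies `u`, while each other station `j`
applies `γ_t^j(δ_t^{(K)}, λ_t^j)`, its strategy evaluated at the common data recorded in
`(iy, iu)` and its private data recorded in the window `p`. -/
noncomputable def prof {n : ℕ} (T t : ℕ) (γ : Strat Y U) (k : Fin K)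
    (iy : ℕ → ∀ j, Y j) (iu : ℕ → ∀ j, U j)
    (p : (Fin (n + 1) → ∀ j, Y j) × (Fin (n + 1) → ∀ j, U j)) (u : U k) : ∀ j, U j :=
  Function.update (fun j => γ j t (mixObs T t k iy p.1) (mixAct T t k iu p.2)) k u

/-- The observation history of all stations obtained from the common data `δy` and the
private windows `py` of all stations. -/
def mixObsAll {n : ℕ} (T t : ℕ) (δy : ℕ → ∀ j, Y j)
    (py : Fin (n + 1) → ∀ j, Y j) : ℕ → ∀ j, Y j :=
  fun s j => if s + T ≤ t then δy s j else py (idx n s) j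

/-- The action history of all stations obtained from the common data `δu` and the private
windows `pu` of all stations. -/
def mixActAll {n : ℕ} (T t : ℕ) (δu : ℕ → ∀ j, U j)
    (pu : Fin (n + 1) → ∀ j, U j) : ℕ → ∀ j, U j :=
  fun s j => if s + T ≤ t then δu s j else pu (idx n s) j

/-- The action profile `u_t^{(K)} = {γ_t^j(δ_t^{(K)}, λ_t^j)}_{j=1}^K`. -/
noncomputable def profAll {n : ℕ} (T t : ℕ) (γ : Strat Y U)
    (δy : ℕ → ∀ j, Y j) (δu : ℕ → ∀ j, U j)
    (p : (Fin (n + 1) → ∀ j, Y j) × (Fin (n + 1) → ∀ j, U j)) : ∀ j, U j :=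
  fun j => γ j t (mixObsAll T t δy p.1) (mixActAll T t δu p.2)

/-- The realization of `I_{t+1}^k` obtained from `i_t^k = (iy, iu)`, the new own
observation `y'` at time `t+1` and the private window `p` of the other stations. -/
noncomputable def newObs {n : ℕ} (T t : ℕ) (k : Fin K) (iy : ℕ → ∀ j, Y j)
    (p : (Fin (n + 1) → ∀ j, Y j) × (Fin (n + 1) → ∀ j, U j)) (y' : Y k) : ℕ → ∀ j, Y j :=
  fun s => if s = t + 1 then Function.update (fun j => iy s j) k y' else mixObs T t k iy p.1 s

/-- The action part of the realization of `I_{t+1}^k`: at time `t` station `k` applies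
`u` and the others apply their strategies. -/
noncomputable def newAct {n : ℕ} (T t : ℕ) (γ : Strat Y U) (k : Fin K)
    (iy : ℕ → ∀ j, Y j) (iu : ℕ → ∀ j, U j)
    (p : (Fin (n + 1) → ∀ j, Y j) × (Fin (n + 1) → ∀ j, U j)) (u : U k) : ℕ → ∀ j, U j :=
  fun s => if s = t then prof T t γ k iy iu p u else mixAct T t k iu p.2 s

/-! ### Dynamic programming equations (Theorem 3 (1.1)) -/

/-- The expected stage cost at time `t` under the private posterior `Ξ_t^k[i_t^k]` when
station `k` applies `u` and the other stations apply their strategies: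
`Σ_{x_t, λ_t^{-k}} ℓ(t, x_t, u_t^k, γ_t^{-k}(δ_t^{(K)}, λ_t^{-k})) Ξ_t^k[i_t^k](x_t, λ_t^{-k})`. -/
noncomputable def dpStage (n T : ℕ) (M : Kernels X Y U) (γ : Strat Y U) (k : Fin K)
    (t : ℕ) (iy : ℕ → ∀ j, Y j) (iu : ℕ → ∀ j, U j) (u : U k) : ℝ :=
  ∑ x : X, ∑ p ∈ privSet n T k t,
    M.cost t x (prof T t γ k iy iu p u) * Xi n T M γ k t iy iu x (pWinY p) (pWinU p)

/-- The expected continuation value: the function `V` at time `t+1`, evaluated at the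
updated realization `(i_t^k, y_{t+1}^k, u_t^k, y_{t-T+1}^{-k}, u_{t-T+1}^{-k})`, averaged
with the kernel
`q_{t+1}^k(dy_{t+1}^k | x_{t+1}, u) s_{t+1}(dx_{t+1} | x_t, u) Ξ_t^k[i_t^k](dx_t, dλ_t^{-k})`. -/
noncomputable def dpCont (n T : ℕ) (M : Kernels X Y U) (γ : Strat Y U) (k : Fin K)
    (t : ℕ) (iy : ℕ → ∀ j, Y j) (iu : ℕ → ∀ j, U j)
    (V : ℕ → (ℕ → ∀ j, Y j) → (ℕ → ∀ j, U j) → ℝ) (u : U k) : ℝ :=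
  ∑ y' : Y k, ∑ x : X, ∑ x' : X, ∑ p ∈ privSet n T k t,
    V (t + 1) (newObs T t k iy p y') (newAct T t γ k iy iu p u) *
      M.obs t k x' (prof T t γ k iy iu p u) y' *
      M.trans t x (prof T t γ k iy iu p u) x' *
      Xi n T M γ k t iy iu x (pWinY p) (pWinU p)

/-- `V` satisfies the dynamic programming equations of Theorem 3 (1.1) for station `k`
(with the other stations' strategies fixed to those of `γ`): at the terminal time the
minimum over the action space of the expected stage cost, and before that the minimum
over the action space of expected stage cost plus expected continuation value, on every
realization of `I_t^k` of positive probability. -/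
noncomputable def SatisfiesDP (n T : ℕ) (M : Kernels X Y U) (γ : Strat Y U) (k : Fin K)
    (V : ℕ → (ℕ → ∀ j, Y j) → (ℕ → ∀ j, U j) → ℝ) : Prop :=
  (∀ iy iu, PosInfo n T M γ k n iy iu →
      V n iy iu = ⨅ u : U k, dpStage n T M γ k n iy iu u) ∧
  (∀ t iy iu, t < n → PosInfo n T M γ k t iy iu →
      V t iy iu = ⨅ u : U k, (dpStage n T M γ k t iy iu u + dpCont n T M γ k t iy iu V u))

/-- Station `k`'s strategy in `γ` attains, at every realization of positive probability,
the minimum in the dynamic programming equations with value function `V`. -/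
noncomputable def AttainsDP (n T : ℕ) (M : Kernels X Y U) (γ : Strat Y U) (k : Fin K)
    (V : ℕ → (ℕ → ∀ j, Y j) → (ℕ → ∀ j, U j) → ℝ) : Prop :=
  (∀ iy iu, PosInfo n T M γ k n iy iu →
      V n iy iu = dpStage n T M γ k n iy iu (γ k n iy iu)) ∧
  (∀ t iy iu, t < n → PosInfo n T M γ k t iy iu →
      V t iy iu = dpStage n T M γ k t iy iu (γ k t iy iu) +
        dpCont n T M γ k t iy iu V (γ k t iy iu))

/-- The value process `𝒱_t^{γ^{k,o}, γ^{-k,o}}(i_t^k)`: the infimum, over admissible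
strategies of station `k` used from time `t` on (station `k` using `γo`'s strategy before
`t` and the other stations using `γo` throughout), of the conditional cost-to-go given
`I_t^k = i_t^k`. -/
noncomputable def Vval (n T : ℕ) (M : Kernels X Y U) (γo : Strat Y U) (k : Fin K) (t : ℕ)
    (iy : ℕ → ∀ j, Y j) (iu : ℕ → ∀ j, U j) : ℝ :=
  sInf { r : ℝ | ∃ g : SStrat Y U k,
    Admissible T (updStrat γo k (splice (γo k) g t)) ∧
    r = Jcond n M (updStrat γo k (splice (γo k) g t)) t
          (InfoEq T (updStrat γo k (splice (γo k) g t)) k t iy iu) }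

/-! ### Structured strategy classes -/

/-- Semi-separated strategies: for every station `k` and time `t`, the action depends on
the information `i_t^k` only through `(Ξ_t^k[i_t^k], δ_t^{(K)}, λ_t^k)`. -/
noncomputable def SemiSeparated (n T : ℕ) (M : Kernels X Y U) (γ : Strat Y U) : Prop :=
  ∀ (k : Fin K) (t : ℕ) (y y' : ℕ → ∀ j, Y j) (u u' : ℕ → ∀ j, U j),
    (∀ x ly lu, Xi n T M γ k t y u x ly lu = Xi n T M γ k t y' u' x ly lu) →
    (∀ s j, s + T ≤ t → y s j = y' s j) →
    (∀ s j, s + T ≤ t → u s j = u' s j) →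
    (∀ s, s ≤ t → t < s + T → y s k = y' s k) →
    (∀ s, s < t → t < s + T → u s k = u' s k) →
    γ k t y u = γ k t y' u'

/-- Separated strategies (with the centralized posterior `Π`): the action depends on
`i_t^k` only through `(Ξ_t^k[i_t^k], Π_t^{(K)}[δ_t^{(K)}], λ_t^k)`. -/
noncomputable def SeparatedPi (n T : ℕ) (M : Kernels X Y U) (γ : Strat Y U) : Prop :=
  ∀ (k : Fin K) (t : ℕ) (y y' : ℕ → ∀ j, Y j) (u u' : ℕ → ∀ j, U j),
    (∀ x ly lu, Xi n T M γ k t y u x ly lu = Xi n T M γ k t y' u' x ly lu) →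
    (∀ x, PiPost n T M γ t y u x = PiPost n T M γ t y' u' x) →
    (∀ s, s ≤ t → t < s + T → y s k = y' s k) →
    (∀ s, s < t → t < s + T → u s k = u' s k) →
    γ k t y u = γ k t y' u'

/-- Separated strategies (with the centralized posterior `Θ`): the action depends on
`i_t^k` only through `(Ξ_t^k[i_t^k], Θ_t^{γ}[δ_t^{(K)}], λ_t^k)`. -/
noncomputable def SeparatedTheta (n T : ℕ) (M : Kernels X Y U) (γ : Strat Y U) : Prop :=
  ∀ (k : Fin K) (t : ℕ) (y y' : ℕ → ∀ j, Y j) (u u' : ℕ → ∀ j, U j),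
    (∀ x ly lu, Xi n T M γ k t y u x ly lu = Xi n T M γ k t y' u' x ly lu) →
    (∀ x ly lu, ThetaPost n T M γ t y u x ly lu = ThetaPost n T M γ t y' u' x ly lu) →
    (∀ s, s ≤ t → t < s + T → y s k = y' s k) →
    (∀ s, s < t → t < s + T → u s k = u' s k) →
    γ k t y u = γ k t y' u'

/-- Information-state strategies: the action depends on `i_t^k` only through the pair
`(Ξ_t^k[i_t^k], Θ_t^{γ}[δ_t^{(K)}])`. -/
noncomputable def InfoStateTheta (n T : ℕ) (M : Kernels X Y U) (γ : Strat Y U) : Prop :=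
  ∀ (k : Fin K) (t : ℕ) (y y' : ℕ → ∀ j, Y j) (u u' : ℕ → ∀ j, U j),
    (∀ x ly lu, Xi n T M γ k t y u x ly lu = Xi n T M γ k t y' u' x ly lu) →
    (∀ x ly lu, ThetaPost n T M γ t y u x ly lu = ThetaPost n T M γ t y' u' x ly lu) →
    γ k t y u = γ k t y' u'


section Helpers

variable {X : Type} {K : ℕ} {Y U : Fin K → Type} [∀ k, Nonempty (U k)]

lemma aux_actUpto_eq (γ : Strat Y U) (y : ℕ → ∀ j, Y j) (t : ℕ) :
    ∀ s, s < t → actUpto γ y t s = act γ y s := by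
  induction t with
  | zero => intro s hs; omega
  | succ t ih =>
    intro s hs
    by_cases h : s = t
    · subst h; simp only [actUpto, if_true]; rfl
    · simp only [actUpto, if_neg h]; exact ih s (by omega)

lemma aux_actUpto_causal {T : ℕ} {γ : Strat Y U} (hγ : Admissible T γ) (hT : 1 ≤ T)
    (y y' : ℕ → ∀ j, Y j) (t : ℕ) :
    (∀ s, s < t → y s = y' s) → actUpto γ y t = actUpto γ y' t := by
  induction t with
  | zero => intro _; rfl
  | succ t ih =>
    intro h
    have e := ih (fun s hs => h s (by omega))
    funext s
    simp only [actUpto, e]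
    split_ifs with hs
    · funext j
      apply hγ
      · intro r i hr; rw [h r (by omega)]
      · intros; rfl
      · intro r hr; rw [h r (by omega)]
      · intros; rfl
    · rfl

lemma aux_act_causal {T : ℕ} {γ : Strat Y U} (hγ : Admissible T γ) (hT : 1 ≤ T)
    (y y' : ℕ → ∀ j, Y j) (t : ℕ) (h : ∀ s, s ≤ t → y s = y' s) :
    act γ y t = act γ y' t := by
  funext j
  unfold act
  rw [aux_actUpto_causal hγ hT y y' t (fun s hs => h s (by omega))]
  apply hγ
  · intro r i hr; rw [h r (by omega)]
  · intros; rfl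
  · intro r hr; rw [h r (by omega)]
  · intros; rfl

/-- Agreement of trajectories up to time `t`. -/
def AgreeTo {n : ℕ} (t : ℕ) (ω ω' : Traj n X Y) : Prop :=
  ∀ s, s ≤ t → ω.1 (idx n s) = ω'.1 (idx n s) ∧ ω.2 (idx n s) = ω'.2 (idx n s)

lemma aux_actAt_agree {n T : ℕ} {γ : Strat Y U} (hγ : Admissible T γ) (hT : 1 ≤ T)
    {t : ℕ} {ω ω' : Traj n X Y} (h : AgreeTo t ω ω') (s : ℕ) (hs : s ≤ t) :
    actAt γ ω s = actAt γ ω' s :=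
  aux_act_causal hγ hT _ _ s (fun r hr => (h r (by omega)).2)

lemma aux_obsAt_agree {n : ℕ} {t : ℕ} {ω ω' : Traj n X Y} (h : AgreeTo t ω ω')
    (s : ℕ) (hs : s ≤ t) (j : Fin K) : obsAt ω s j = obsAt ω' s j := by
  unfold obsAt; rw [(h s hs).2]

lemma aux_stateAt_agree {n : ℕ} {t : ℕ} {ω ω' : Traj n X Y} (h : AgreeTo t ω ω')
    (s : ℕ) (hs : s ≤ t) : stateAt ω s = stateAt ω' s := (h s hs).1

lemma aux_agree_symm {n : ℕ} {t : ℕ} {ω ω' : Traj n X Y} (h : AgreeTo t ω ω') :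
    AgreeTo t ω' ω := fun s hs => ⟨(h s hs).1.symm, (h s hs).2.symm⟩

lemma aux_info_agree {n T : ℕ} {γ : Strat Y U} (hγ : Admissible T γ) (hT : 1 ≤ T)
    (k : Fin K) {t : ℕ} (iy : ℕ → ∀ j, Y j) (iu : ℕ → ∀ j, U j)
    {ω ω' : Traj n X Y} (h : AgreeTo t ω ω') (H : InfoEq T γ k t iy iu ω) :
    InfoEq T γ k t iy iu ω' := by
  obtain ⟨a, b, c, d⟩ := H
  refine ⟨fun s j hs => ?_, fun s j hs => ?_, fun s hs => ?_, fun s hs => ?_⟩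
  · rw [← aux_obsAt_agree h s (by omega)]; exact a s j hs
  · rw [← aux_actAt_agree hγ hT h s (by omega)]; exact b s j hs
  · rw [← aux_obsAt_agree h s (by omega)]; exact c s hs
  · rw [← aux_actAt_agree hγ hT h s (by omega)]; exact d s hs

lemma aux_priv_agree {n T : ℕ} {γ : Strat Y U} (hγ : Admissible T γ) (hT : 1 ≤ T)
    (k : Fin K) {t : ℕ} (ly : ℕ → ∀ j, Y j) (lu : ℕ → ∀ j, U j)
    {ω ω' : Traj n X Y} (h : AgreeTo t ω ω') (H : PrivOthersEq T γ k t ly lu ω) :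
    PrivOthersEq T γ k t ly lu ω' := by
  obtain ⟨a, b⟩ := H
  refine ⟨fun s j hj hs hs' => ?_, fun s j hj hs hs' => ?_⟩
  · rw [← aux_obsAt_agree h s (by omega)]; exact a s j hj hs hs'
  · rw [← aux_actAt_agree hγ hT h s (by omega)]; exact b s j hj hs hs'

/-- On the event `I_t^k = i`, station `k`'s strategy evaluated at `i` gives the recorded
actions. -/
lemma aux_consistent {n T : ℕ} {γ : Strat Y U} (hγ : Admissible T γ) (hT : 1 ≤ T)
    (k : Fin K) {t : ℕ} (iy : ℕ → ∀ j, Y j) (iu : ℕ → ∀ j, U j)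
    {ω : Traj n X Y} (H : InfoEq T γ k t iy iu ω) (s : ℕ) (hs : s < t) :
    γ k s iy iu = iu s k := by
  obtain ⟨a, b, c, d⟩ := H
  rw [← d s hs]
  unfold actAt act
  apply hγ
  · intro r j hr; exact (a r j (by omega)).symm
  · intro r j hr; rw [aux_actUpto_eq _ _ _ _ (by omega)]; exact (b r j (by omega)).symm
  · intro r hr; exact (c r (by omega)).symm
  · intro r hr; rw [aux_actUpto_eq _ _ _ _ (by omega)]; exact (d r (by omega)).symm

lemma aux_act_same {n T : ℕ} {γ γ' : Strat Y U}
    (hγ' : Admissible T γ') (hT : 1 ≤ T)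
    (k : Fin K) (hne : ∀ j, j ≠ k → γ j = γ' j)
    {t : ℕ} (iy : ℕ → ∀ j, Y j) (iu : ℕ → ∀ j, U j)
    (hc : ∀ s, s < t → γ' k s iy iu = iu s k)
    {ω : Traj n X Y} (H : InfoEq T γ k t iy iu ω) :
    ∀ s, s < t → actAt γ ω s = actAt γ' ω s := by
  obtain ⟨a, b, c, d⟩ := H
  have key : ∀ s, s ≤ t →
      actUpto γ (fun s => ω.2 (idx n s)) s = actUpto γ' (fun s => ω.2 (idx n s)) s ∧
      (s < t → actAt γ ω s = actAt γ' ω s) := by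
    intro s
    have imp : s ≤ t →
      actUpto γ (fun s => ω.2 (idx n s)) s = actUpto γ' (fun s => ω.2 (idx n s)) s →
      (s < t → actAt γ ω s = actAt γ' ω s) := by
      intro _ e hs
      funext j
      by_cases hj : j = k
      · subst hj
        rw [d s hs, ← hc s hs]
        unfold actAt act
        rw [← e]
        apply hγ'
        · intro r i hr; exact (a r i (by omega)).symm
        · intro r i hr
          rw [aux_actUpto_eq _ _ _ _ (by omega)]; exact (b r i (by omega)).symm
        · intro r hr; exact (c r (by omega)).symm
        · intro r hr
          rw [aux_actUpto_eq _ _ _ _ (by omega)]; exact (d r (by omega)).symm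
      · unfold actAt act
        rw [hne j hj, e]
    induction s with
    | zero => intro h0; exact ⟨rfl, imp h0 rfl⟩
    | succ s ih =>
      intro hs
      have imp' := ih (by
        intro _ e hs'
        funext j
        by_cases hj : j = k
        · subst hj
          rw [d s hs', ← hc s hs']
          unfold actAt act
          rw [← e]
          apply hγ'
          · intro r i hr; exact (a r i (by omega)).symm
          · intro r i hr
            rw [aux_actUpto_eq _ _ _ _ (by omega)]; exact (b r i (by omega)).symm
          · intro r hr; exact (c r (by omega)).symm
          · intro r hr
            rw [aux_actUpto_eq _ _ _ _ (by omega)]; exact (d r (by omega)).symm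
        · unfold actAt act
          rw [hne j hj, e]) (by omega)
      have e : actUpto γ (fun s => ω.2 (idx n s)) (s+1)
          = actUpto γ' (fun s => ω.2 (idx n s)) (s+1) := by
        have h2 := imp'.2 (by omega)
        unfold actAt act at h2
        funext r
        simp only [actUpto]
        rw [h2, imp'.1]
      exact ⟨e, imp hs e⟩
  exact fun s hs => (key s hs.le).2 hs

lemma aux_info_same {n T : ℕ} {γ γ' : Strat Y U}
    (hγ' : Admissible T γ') (hT : 1 ≤ T)
    (k : Fin K) (hne : ∀ j, j ≠ k → γ j = γ' j)
    {t : ℕ} (iy : ℕ → ∀ j, Y j) (iu : ℕ → ∀ j, U j)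
    (hc : ∀ s, s < t → γ' k s iy iu = iu s k)
    {ω : Traj n X Y} (H : InfoEq T γ k t iy iu ω) : InfoEq T γ' k t iy iu ω := by
  have e := aux_act_same hγ' hT k hne iy iu hc H
  obtain ⟨a, b, c, d⟩ := H
  refine ⟨a, fun s j hs => ?_, c, fun s hs => ?_⟩
  · rw [← e s (by omega)]; exact b s j hs
  · rw [← e s (by omega)]; exact d s hs

lemma aux_priv_same {n T : ℕ} {γ γ' : Strat Y U} (k : Fin K) {t : ℕ}
    (ly : ℕ → ∀ j, Y j) (lu : ℕ → ∀ j, U j) {ω : Traj n X Y}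
    (e : ∀ s, s < t → actAt γ ω s = actAt γ' ω s) :
    PrivOthersEq T γ k t ly lu ω ↔ PrivOthersEq T γ' k t ly lu ω := by
  unfold PrivOthersEq
  refine and_congr Iff.rfl ?_
  refine forall_congr' fun s => forall_congr' fun j => forall_congr' fun _ =>
    forall_congr' fun hs => ?_
  rw [e s hs]

variable [Fintype X] [∀ k, Fintype (Y k)]

/-- The probability weight of a trajectory up to time `m`. -/
noncomputable def probTo {n : ℕ} (M : Kernels X Y U) (γ : Strat Y U) (m : ℕ)
    (ω : Traj n X Y) : ℝ :=
  M.prior (stateAt ω 0) * (∏ k, M.obs0 k (stateAt ω 0) (obsAt ω 0 k)) *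
    ∏ t ∈ Finset.range m,
      (M.trans t (stateAt ω t) (actAt γ ω t) (stateAt ω (t + 1)) *
        ∏ k, M.obs t k (stateAt ω (t + 1)) (actAt γ ω t) (obsAt ω (t + 1) k))

lemma aux_probTo_agree {n T : ℕ} (M : Kernels X Y U) {γ : Strat Y U}
    (hγ : Admissible T γ) (hT : 1 ≤ T) {m : ℕ} {ω ω' : Traj n X Y}
    (h : AgreeTo m ω ω') : probTo M γ m ω = probTo M γ m ω' := by
  unfold probTo
  rw [aux_stateAt_agree h 0 (by omega)]
  congr 1
  · congr 1
    exact Finset.prod_congr rfl fun k _ => by rw [aux_obsAt_agree h 0 (by omega)]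
  · refine Finset.prod_congr rfl fun s hs => ?_
    have hs := Finset.mem_range.1 hs
    rw [aux_stateAt_agree h s (by omega), aux_stateAt_agree h (s+1) (by omega),
      aux_actAt_agree hγ hT h s (by omega)]
    congr 1
    exact Finset.prod_congr rfl fun k _ => by rw [aux_obsAt_agree h (s+1) (by omega)]

/-- Replace the coordinates of `ω` at index `i`. -/
noncomputable def updT {n : ℕ} (i : Fin (n + 1)) (ω : Traj n X Y) (v : X × (∀ k, Y k)) :
    Traj n X Y := (Function.update ω.1 i v.1, Function.update ω.2 i v.2)

lemma aux_resample {n : ℕ} (i : Fin (n + 1)) (f : Traj n X Y → ℝ) :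
    ∑ ω : Traj n X Y, ∑ v : X × (∀ k, Y k), f (updT i ω v)
      = (Fintype.card (X × (∀ k, Y k)) : ℝ) * ∑ ω : Traj n X Y, f ω := by
  have inv : Function.Involutive (fun p : Traj n X Y × (X × (∀ k, Y k)) =>
      ((updT i p.1 p.2, (p.1.1 i, p.1.2 i)) : Traj n X Y × (X × (∀ k, Y k)))) := by
    rintro ⟨⟨a, b⟩, ⟨c, d⟩⟩
    simp [updT]
  rw [← Fintype.sum_prod_type' (f := fun ω v => f (updT i ω v))]
  rw [Fintype.sum_equiv (inv.toPerm) (fun p => f (updT i p.1 p.2)) (fun p => f p.1)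
    (fun p => rfl)]
  rw [Fintype.sum_prod_type]
  simp [Finset.mul_sum]

lemma aux_upd_agree {n m : ℕ} (hm : m < n) (ω : Traj n X Y) (v : X × (∀ k, Y k)) :
    AgreeTo m (updT (idx n (m+1)) ω v) ω := by
  intro s hs
  have : idx n s ≠ idx n (m+1) := by
    intro h
    have := congrArg Fin.val h
    simp only [idx] at this
    omega
  simp [updT, this]

lemma aux_step {n T : ℕ} (M : Kernels X Y U) (hM : M.IsPMF) {γ : Strat Y U}
    (hγ : Admissible T γ) (hT : 1 ≤ T) {t m : ℕ} (htm : t ≤ m) (hm : m < n)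
    (A : Traj n X Y → Prop) (hA : ∀ ω ω', AgreeTo t ω ω' → (A ω ↔ A ω')) :
    (Fintype.card (X × (∀ k, Y k)) : ℝ) *
        ∑ ω : Traj n X Y, (if A ω then probTo M γ (m+1) ω else 0)
      = ∑ ω : Traj n X Y, (if A ω then probTo M γ m ω else 0) := by
  rw [← aux_resample (idx n (m+1))]
  refine Finset.sum_congr rfl fun ω _ => ?_
  have hag := fun v => aux_upd_agree hm ω v
  have hAv : ∀ v, A (updT (idx n (m+1)) ω v) ↔ A ω := fun v =>
    hA _ _ (fun s hs => hag v s (by omega))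
  simp only [hAv]
  by_cases h : A ω
  · simp only [if_pos h]
    have e : ∀ v : X × (∀ k, Y k), probTo M γ (m+1) (updT (idx n (m+1)) ω v)
        = probTo M γ m ω * (M.trans m (stateAt ω m) (actAt γ ω m) v.1 *
          ∏ k, M.obs m k v.1 (actAt γ ω m) (v.2 k)) := by
      intro v
      rw [← aux_probTo_agree M hγ hT (hag v)]
      conv_lhs => unfold probTo
      rw [Finset.prod_range_succ, ← mul_assoc]
      rw [aux_stateAt_agree (hag v) m le_rfl, aux_actAt_agree hγ hT (hag v) m le_rfl]
      have h1 : stateAt (updT (idx n (m+1)) ω v) (m+1) = v.1 := by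
        simp [stateAt, updT]
      have h2 : ∀ k, obsAt (updT (idx n (m+1)) ω v) (m+1) k = v.2 k := by
        intro k; simp [obsAt, updT]
      simp only [h1, h2]
      rfl
    simp only [e]
    rw [← Finset.mul_sum, Fintype.sum_prod_type]
    have hobs : ∀ x : X, ∑ y : (∀ k, Y k), ∏ k, M.obs m k x (actAt γ ω m) (y k) = 1 := by
      intro x
      rw [← Fintype.prod_sum]
      exact Finset.prod_eq_one fun k _ => (hM.2.2.2.2 m k x _).2
    simp only [← Finset.mul_sum, hobs, mul_one]
    rw [(hM.2.2.2.1 m _ _).2, mul_one]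
  · simp [h]

lemma aux_Pr_same [Nonempty X] [∀ k, Nonempty (Y k)] {n T : ℕ}
    (M : Kernels X Y U) (hM : M.IsPMF) {γ γ' : Strat Y U}
    (hγ : Admissible T γ) (hγ' : Admissible T γ') (hT : 1 ≤ T) {t : ℕ} (ht : t ≤ n)
    (A : Traj n X Y → Prop) (hA : ∀ ω ω', AgreeTo t ω ω' → (A ω ↔ A ω'))
    (hact : ∀ ω, A ω → ∀ s, s < t → actAt γ ω s = actAt γ' ω s) :
    Pr n M γ A = Pr n M γ' A := by
  have key : ∀ m, t ≤ m → m ≤ n →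
      ∑ ω : Traj n X Y, (if A ω then probTo M γ m ω else 0)
        = ∑ ω : Traj n X Y, (if A ω then probTo M γ' m ω else 0) := by
    intro m htm
    induction m, htm using Nat.le_induction with
    | base =>
      intro _
      refine Finset.sum_congr rfl fun ω _ => ?_
      by_cases h : A ω
      · simp only [if_pos h]
        unfold probTo
        congr 1
        refine Finset.prod_congr rfl fun s hs => ?_
        rw [hact ω h s (Finset.mem_range.1 hs)]
      · simp [h]
    | succ m htm ih =>
      intro hm
      have hN : (Fintype.card (X × (∀ k, Y k)) : ℝ) ≠ 0 := by
        exact_mod_cast Fintype.card_ne_zero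
      apply mul_left_cancel₀ hN
      rw [aux_step M hM hγ hT htm (by omega) A hA, aux_step M hM hγ' hT htm (by omega) A hA]
      exact ih (by omega)
  exact key n ht le_rfl

lemma aux_pos_exists {n : ℕ} (M : Kernels X Y U) (γ : Strat Y U) (A : Traj n X Y → Prop)
    (h : 0 < Pr n M γ A) : ∃ ω, A ω := by
  by_contra hne
  push Not at hne
  simp [Pr, hne] at h

lemma aux_Xi_same [Nonempty X] [∀ k, Nonempty (Y k)] (n T : ℕ) (hT : 1 ≤ T)
    (M : Kernels X Y U) (hM : M.IsPMF) (γ γ' : Strat Y U) (k : Fin K)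
    (hγ : Admissible T γ) (hγ' : Admissible T γ') (hne : ∀ j, j ≠ k → γ j = γ' j)
    (t : ℕ) (ht : t ≤ n) (iy : ℕ → ∀ j, Y j) (iu : ℕ → ∀ j, U j)
    (hp : PosInfo n T M γ k t iy iu) (hp' : PosInfo n T M γ' k t iy iu)
    (x : X) (ly : ℕ → ∀ j, Y j) (lu : ℕ → ∀ j, U j) :
    Xi n T M γ k t iy iu x ly lu = Xi n T M γ' k t iy iu x ly lu := by
  obtain ⟨w, hw⟩ := aux_pos_exists M γ _ hp
  obtain ⟨w', hw'⟩ := aux_pos_exists M γ' _ hp'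
  have c := aux_consistent hγ hT k iy iu hw
  have c' := aux_consistent hγ' hT k iy iu hw'
  have hact := fun (ω : Traj n X Y) (h : InfoEq T γ k t iy iu ω) =>
    aux_act_same hγ' hT k hne iy iu c' h
  have hI : (InfoEq T γ' k t iy iu : Traj n X Y → Prop) = InfoEq T γ k t iy iu := by
    funext ω
    exact propext ⟨aux_info_same hγ hT k (fun j hj => (hne j hj).symm) iy iu c,
      aux_info_same hγ' hT k hne iy iu c'⟩
  have hJ : (fun ω : Traj n X Y =>
      (stateAt ω t = x ∧ PrivOthersEq T γ' k t ly lu ω) ∧ InfoEq T γ k t iy iu ω)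
      = fun ω => (stateAt ω t = x ∧ PrivOthersEq T γ k t ly lu ω) ∧ InfoEq T γ k t iy iu ω := by
    funext ω
    refine propext (and_congr_left fun h => and_congr_right fun _ => ?_)
    exact (aux_priv_same k ly lu (hact ω h)).symm
  have hIa : ∀ ω ω' : Traj n X Y, AgreeTo t ω ω' →
      (InfoEq T γ k t iy iu ω ↔ InfoEq T γ k t iy iu ω') := fun ω ω' h =>
    ⟨aux_info_agree hγ hT k iy iu h, aux_info_agree hγ hT k iy iu (aux_agree_symm h)⟩
  unfold Xi condPr
  rw [hI, hJ]
  congr 1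
  · refine aux_Pr_same M hM hγ hγ' hT ht _ (fun ω ω' h => ?_) (fun ω h => hact ω h.2)
    refine and_congr (and_congr ?_ ?_) (hIa ω ω' h)
    · rw [aux_stateAt_agree h t le_rfl]
    · exact ⟨aux_priv_agree hγ hT k ly lu h, aux_priv_agree hγ hT k ly lu (aux_agree_symm h)⟩
  · exact aux_Pr_same M hM hγ hγ' hT ht _ hIa hact

end Helpers

/-!  STATEMENT 5 (Lemma 3: the private posterior `Ξ_t^k` does not depend on station `k`'s
strategy, only on the realized actions contained in `i_t^k`). -/

/-- For every station `k`, time `t`, fixed strategies `γ^{-k}` of the other stations and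
two strategies `γ^k`, `γ̃^k` of station `k`, if the realization `I_t^k = i_t^k` has
positive probability under both profiles, then the private posteriors coincide:
`ℙ^{γ^k,γ^{-k}}(X_t = x, Λ_t^{-k} = λ | i_t^k) = ℙ^{γ̃^k,γ^{-k}}(X_t = x, Λ_t^{-k} = λ | i_t^k)`
for all `(x, λ)`. -/
theorem private_posterior_independent_of_own_strategy
    {X : Type} [Fintype X] [DecidableEq X] [Nonempty X]
    {K : ℕ} {Y U : Fin K → Type}
    [∀ k, Fintype (Y k)] [∀ k, DecidableEq (Y k)] [∀ k, Nonempty (Y k)]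
    [∀ k, Fintype (U k)] [∀ k, DecidableEq (U k)] [∀ k, Nonempty (U k)]
    (n T : ℕ) (hT : 1 ≤ T) (hTn : T ≤ n)
    (M : Kernels X Y U) (hM : M.IsPMF)
    (γb : Strat Y U) (k : Fin K) (g₁ g₂ : SStrat Y U k)
    (h₁ : Admissible T (updStrat γb k g₁))
    (h₂ : Admissible T (updStrat γb k g₂))
    (t : ℕ) (ht : t ≤ n)
    (iy : ℕ → ∀ j, Y j) (iu : ℕ → ∀ j, U j)
    (hp₁ : PosInfo n T M (updStrat γb k g₁) k t iy iu)
    (hp₂ : PosInfo n T M (updStrat γb k g₂) k t iy iu) :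
    ∀ (x : X) (ly : ℕ → ∀ j, Y j) (lu : ℕ → ∀ j, U j),
      Xi n T M (updStrat γb k g₁) k t iy iu x ly lu =
        Xi n T M (updStrat γb k g₂) k t iy iu x ly lu := by
  intro x ly lu
  refine aux_Xi_same n T hT M hM _ _ k h₁ h₂ (fun j hj => ?_) t ht iy iu hp₁ hp₂ x ly lu
  simp [updStrat, hj]

end DelayedSharing
end

section
/- For every K-tuple of strategies γ^{(K)} and every t ∈ {T+1,…,n}, the centralized posterior Π_t^{(K)}[δ_t^{(K)}] does not depend on the strategies γ^{(K)} (only on the realized observations and actions contained in δ_t^{(K)}), and satisfies the Markov recursion: with δ_{t+1}^{(K)} = {δ_t^{(K)}, y_{t-T+1}^{(K)}, u_{t-T+1}^{(K)}}, Π_{t+1}^{(K)}[δ_{t+1}^{(K)}](x_{t-T+1}) is the normalization over x_{t-T+1} of Σ_{x_{t-T}} s_{t-T+1}(x_{t-T+1} | x_{t-T}, u_{t-T}^{(K)}) · ∏_{k=1}^K q_{t-T+1}^k(y_{t-T+1}^k | x_{t-T+1}, u_{t-T}^{(K)}) · Π_t^{(K)}[δ_t^{(K)}](x_{t-T}), with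 initial condition Π_{T+1}^{(K)}[δ_{T+1}^{(K)}] = ℙ(X_1 = · | Y_1^{(K)} = y_1^{(K)}). In particular, the update depends only on the actions u_{t-T}^{(K)} and the new shared observations y_{t-T+1}^{(K)}, not on the strategies. -/
/-!
Decentralized stochastic network with `T`-step delayed sharing information patterns
(canonical finite-path-space formalization).

Times are 0-based: the paper's horizon `{1,…,n}` is encoded as `{0,…,n}` here
(so the paper's terminal time `n` is `n`, and paper time `t` corresponds to index `t-1`).

The sample space is the (finite) space of state/observation trajectories; given a
strategy profile the actions are determined recursively, and the probability of a
trajectory is the product of the Markovian kernels.  All posteriors (the private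
posterior `Ξ` and the centralized posteriors `Π`, `Θ`) are elementary conditional
probabilities on this finite space.
-/

open Finset
open scoped BigOperators Classical

namespace DelayedSharing

variable {X : Type} {K : ℕ} {Y U : Fin K → Type}

variable [∀ k, Nonempty (U k)]

variable [Fintype X] [∀ k, Fintype (Y k)]

/-! ### Finite parametrization of private realizations -/

variable [∀ k, DecidableEq (Y k)] [∀ k, DecidableEq (U k)] [∀ k, Fintype (U k)]
variable [∀ k, Nonempty (Y k)]

/-!  STATEMENT 6 (Theorem 2 (1): the centralized posterior `Π_t^{(K)}` is strategy
independent and satisfies a Markov recursion). -/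


/-! ### Helper lemmas -/

set_option linter.unusedSectionVars false

theorem act_causal (T : ℕ) (hT : 1 ≤ T) (γ : Strat Y U) (hγ : Admissible T γ)
    (y y' : ℕ → ∀ j, Y j) (t : ℕ) (h : ∀ s, s ≤ t → y s = y' s) :
    act γ y t = act γ y' t := by
  have key : ∀ m, m ≤ t → actUpto γ y m = actUpto γ y' m := by
    intro m
    induction m with
    | zero => intro _; rfl
    | succ m ih =>
      intro hm
      have ih' := ih (by omega)
      funext s
      simp only [actUpto]
      split_ifs with hs
      · funext j
        rw [ih']
        apply hγ
        · intro s j hs; rw [h s (by omega)]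
        · intros; rfl
        · intro s hs; rw [h s (by omega)]
        · intros; rfl
      · rw [ih']
  funext j
  unfold act
  rw [key t le_rfl]
  apply hγ
  · intro s j hs; rw [h s (by omega)]
  · intros; rfl
  · intro s hs; rw [h s (by omega)]
  · intros; rfl

theorem idx_castSucc (n s : ℕ) (h : s ≤ n) : idx (n + 1) s = (idx n s).castSucc := by
  apply Fin.ext; simp [idx]; omega

theorem idx_last (n : ℕ) : idx (n + 1) (n + 1) = Fin.last (n + 1) := by
  apply Fin.ext; simp [idx]

/-- Extension of a trajectory by one time step. -/
def ext1 {n : ℕ} (ω : Traj n X Y) (x : X) (y : ∀ k, Y k) : Traj (n + 1) X Y :=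
  (Fin.snoc (α := fun _ => X) ω.1 x, Fin.snoc (α := fun _ => ∀ k, Y k) ω.2 y)

theorem ext1_snd {n : ℕ} (ω : Traj n X Y) (x : X) (y : ∀ k, Y k) (s : ℕ) (h : s ≤ n) :
    (ext1 ω x y).2 (idx (n + 1) s) = ω.2 (idx n s) := by
  simp [ext1, idx_castSucc n s h]

theorem ext1_fst {n : ℕ} (ω : Traj n X Y) (x : X) (y : ∀ k, Y k) (s : ℕ) (h : s ≤ n) :
    stateAt (ext1 ω x y) s = stateAt ω s := by
  simp [stateAt, ext1, idx_castSucc n s h]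

theorem ext1_snd_last {n : ℕ} (ω : Traj n X Y) (x : X) (y : ∀ k, Y k) :
    (ext1 ω x y).2 (idx (n + 1) (n + 1)) = y := by
  simp [ext1, idx_last]

theorem ext1_fst_last {n : ℕ} (ω : Traj n X Y) (x : X) (y : ∀ k, Y k) :
    stateAt (ext1 ω x y) (n + 1) = x := by
  simp [stateAt, ext1, idx_last]

theorem sum_ext1 {n : ℕ} (f : Traj (n + 1) X Y → ℝ) :
    ∑ ω, f ω = ∑ ω : Traj n X Y, ∑ x : X, ∑ y : (∀ k, Y k), f (ext1 ω x y) := by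
  let e : Traj n X Y × (X × (∀ k, Y k)) ≃ Traj (n + 1) X Y :=
    { toFun := fun p => ext1 p.1 p.2.1 p.2.2
      invFun := fun ω => ((Fin.init (α := fun _ => X) ω.1,
        Fin.init (α := fun _ => ∀ k, Y k) ω.2), (ω.1 (Fin.last _), ω.2 (Fin.last _)))
      left_inv := by
        rintro ⟨⟨a, b⟩, x, y⟩
        simp [ext1]
      right_inv := by
        rintro ⟨a, b⟩
        simp [ext1] }
  rw [← Equiv.sum_comp e f, Fintype.sum_prod_type]
  refine Finset.sum_congr rfl fun ω _ => ?_
  rw [Fintype.sum_prod_type]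
  rfl

theorem actAt_ext1 (T : ℕ) (hT : 1 ≤ T) (γ : Strat Y U) (hγ : Admissible T γ) {n : ℕ}
    (ω : Traj n X Y) (x : X) (y : ∀ k, Y k) (t : ℕ) (ht : t ≤ n) :
    actAt γ (ext1 ω x y) t = actAt γ ω t := by
  apply act_causal T hT γ hγ
  intro s hs
  exact ext1_snd ω x y s (by omega)

theorem prob_ext1 (T : ℕ) (hT : 1 ≤ T) (M : Kernels X Y U) (γ : Strat Y U)
    (hγ : Admissible T γ) {n : ℕ} (ω : Traj n X Y) (x : X) (y : ∀ k, Y k) :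
    prob (n + 1) M γ (ext1 ω x y) = prob n M γ ω *
      (M.trans n (stateAt ω n) (actAt γ ω n) x * ∏ k, M.obs n k x (actAt γ ω n) (y k)) := by
  unfold prob
  rw [Finset.prod_range_succ, ← mul_assoc]
  refine congrArg₂ (· * ·) ?_ ?_
  · refine congrArg₂ (· * ·) ?_ ?_
    · simp only [obsAt, ext1_fst ω x y 0 (Nat.zero_le _), ext1_snd ω x y 0 (Nat.zero_le _)]
    · refine Finset.prod_congr rfl fun t ht => ?_
      have ht := Finset.mem_range.1 ht
      simp only [obsAt, ext1_fst ω x y t (by omega), ext1_fst ω x y (t + 1) (by omega),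
        ext1_snd ω x y (t + 1) (by omega), actAt_ext1 T hT γ hγ ω x y t (by omega)]
  · simp only [obsAt, ext1_fst ω x y n le_rfl, ext1_fst_last, ext1_snd_last,
      actAt_ext1 T hT γ hγ ω x y n le_rfl]

/-- The unnormalized filter. -/
noncomputable def alpha (M : Kernels X Y U) (u : ℕ → ∀ j, U j) (y : ℕ → ∀ j, Y j) : ℕ → X → ℝ
  | 0 => fun x => M.prior x * ∏ k, M.obs0 k x (y 0 k)
  | m + 1 => fun x' => ∑ x, M.trans m x (u m) x' *
      (∏ j, M.obs m j x' (u m) (y (m + 1) j)) * alpha M u y m x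

theorem alpha_congr (M : Kernels X Y U) (u u' : ℕ → ∀ j, U j) (y : ℕ → ∀ j, Y j) (m : ℕ)
    (h : ∀ s, s < m → u s = u' s) : alpha M u y m = alpha M u' y m := by
  induction m with
  | zero => rfl
  | succ m ih =>
    funext x'
    simp only [alpha]
    rw [h m (by omega), ih (fun s hs => h s (by omega))]

theorem alpha_nonneg (M : Kernels X Y U) (hM : M.IsPMF) (u : ℕ → ∀ j, U j)
    (y : ℕ → ∀ j, Y j) (m : ℕ) (x : X) : 0 ≤ alpha M u y m x := by
  obtain ⟨h1, h2, h3, h4, h5⟩ := hM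
  induction m generalizing x with
  | zero => exact mul_nonneg (h1 x) (Finset.prod_nonneg fun k _ => (h3 k x).1 _)
  | succ m ih =>
    refine Finset.sum_nonneg fun x' _ => mul_nonneg (mul_nonneg ((h4 _ _ _).1 _) ?_) (ih x')
    exact Finset.prod_nonneg fun k _ => (h5 _ _ _ _).1 _

theorem sum_obs_prod (M : Kernels X Y U) (hM : M.IsPMF) (n : ℕ) (x : X) (u : ∀ j, U j) :
    ∑ y : (∀ k, Y k), ∏ k, M.obs n k x u (y k) = 1 := by
  obtain ⟨h1, h2, h3, h4, h5⟩ := hM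
  rw [← Fintype.prod_sum (fun k y => M.obs n k x u y)]
  exact Finset.prod_eq_one fun k _ => (h5 n k x u).2

/-- The joint event of the state at time `m` and all observations up to `m`. -/
def ObsEv {n : ℕ} (y : ℕ → ∀ j, Y j) (m : ℕ) (x : X) (ω : Traj n X Y) : Prop :=
  stateAt ω m = x ∧ ∀ s, s ≤ m → ω.2 (idx n s) = y s

theorem Pr_ObsEv (T : ℕ) (hT : 1 ≤ T) (M : Kernels X Y U) (hM : M.IsPMF) (γ : Strat Y U)
    (hγ : Admissible T γ) (y : ℕ → ∀ j, Y j) (n : ℕ) :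
    ∀ (m : ℕ) (x : X), m ≤ n → Pr n M γ (ObsEv y m x) = alpha M (act γ y) y m x := by
  induction n with
  | zero =>
    intro m x hm
    obtain rfl : m = 0 := by omega
    have hi : ∀ i : Fin (0 + 1), i = idx 0 0 := fun i => Fin.ext (by simp [idx])
    unfold Pr
    rw [Finset.sum_eq_single ((fun _ => x, fun _ => y 0) : Traj 0 X Y)]
    · rw [if_pos]
      · simp [prob, alpha, stateAt, obsAt]
      · refine ⟨rfl, fun s hs => ?_⟩
        obtain rfl : s = 0 := by omega
        rfl
    · intro ω _ hne
      rw [if_neg]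
      rintro ⟨h1, h2⟩
      apply hne
      have h2 := h2 0 le_rfl
      refine Prod.ext ?_ ?_
      · funext i
        rw [hi i]; exact h1
      · funext i
        rw [hi i]; exact h2
    · simp
  | succ n ih =>
    intro m x hm
    rcases Nat.lt_or_ge n m with h | h
    · obtain rfl : m = n + 1 := by omega
      have hev : ∀ (ω : Traj n X Y) (x' : X) (y' : ∀ k, Y k),
          (ObsEv y (n + 1) x (ext1 ω x' y')) ↔
            (x' = x ∧ y' = y (n + 1) ∧ ObsEv y n (stateAt ω n) ω) := by
        intro ω x' y'
        unfold ObsEv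
        rw [ext1_fst_last]
        constructor
        · rintro ⟨h1, h2⟩
          refine ⟨h1, ?_, rfl, ?_⟩
          · have := h2 (n + 1) le_rfl
            rwa [ext1_snd_last] at this
          · intro s hs
            rw [← ext1_snd ω x' y' s hs]
            exact h2 s (by omega)
        · rintro ⟨h1, h2, _, h3⟩
          refine ⟨h1, fun s hs => ?_⟩
          rcases Nat.lt_or_ge n s with hs' | hs'
          · obtain rfl : s = n + 1 := by omega
            rw [ext1_snd_last]; exact h2
          · rw [ext1_snd _ _ _ _ hs']; exact h3 s hs'
      unfold Pr
      rw [sum_ext1]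
      simp only [hev, prob_ext1 T hT M γ hγ]
      have step1 : ∀ ω : Traj n X Y, (∑ x' : X, ∑ y' : (∀ k, Y k),
          if x' = x ∧ y' = y (n + 1) ∧ ObsEv y n (stateAt ω n) ω then
            prob n M γ ω * (M.trans n (stateAt ω n) (actAt γ ω n) x' *
              ∏ k, M.obs n k x' (actAt γ ω n) (y' k)) else 0) =
          ∑ z : X, M.trans n z (act γ y n) x *
            (∏ j, M.obs n j x (act γ y n) (y (n + 1) j)) *
              (if ObsEv y n z ω then prob n M γ ω else 0) := by
        intro ω
        rw [Finset.sum_eq_single x, Finset.sum_eq_single (y (n + 1)),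
          Finset.sum_eq_single (stateAt ω n)]
        · by_cases hc : ObsEv y n (stateAt ω n) ω
          · have ha : actAt γ ω n = act γ y n :=
              act_causal T hT γ hγ _ _ n (fun s hs => hc.2 s hs)
            simp only [hc, and_self, if_true, ha]
            ring
          · simp [hc]
        · intro z _ hz
          rw [if_neg (fun hc => hz hc.1.symm), mul_zero]
        · simp
        · intro y' _ hy'
          rw [if_neg (fun hc => hy' hc.2.1)]
        · simp
        · intro x' _ hx'
          refine Finset.sum_eq_zero fun y' _ => ?_
          rw [if_neg (fun hc => hx' hc.1)]
        · simp
      simp only [step1]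
      rw [Finset.sum_comm]
      simp only [alpha]
      refine Finset.sum_congr rfl fun z _ => ?_
      rw [← Finset.mul_sum, ← ih n z le_rfl]
      rfl
    · rw [← ih m x h]
      have hev : ∀ (ω : Traj n X Y) (x' : X) (y' : ∀ k, Y k),
          (ObsEv y m x (ext1 ω x' y')) ↔ ObsEv y m x ω := by
        intro ω x' y'
        unfold ObsEv
        rw [ext1_fst _ _ _ _ h]
        refine and_congr Iff.rfl (forall_congr' fun s => forall_congr' fun hs => ?_)
        rw [ext1_snd _ _ _ _ (by omega)]
      unfold Pr
      rw [sum_ext1]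
      simp only [hev, prob_ext1 T hT M γ hγ]
      refine Finset.sum_congr rfl fun ω _ => ?_
      split_ifs
      · simp only [← Finset.mul_sum, sum_obs_prod M hM, mul_one]
        obtain ⟨h1, h2, h3, h4, h5⟩ := hM
        rw [(h4 _ _ _).2, mul_one]
      · simp

theorem Pr_congr (n : ℕ) (M : Kernels X Y U) (γ : Strat Y U) (A B : Traj n X Y → Prop)
    (h : ∀ ω, A ω ↔ B ω) : Pr n M γ A = Pr n M γ B := by
  have : A = B := funext fun ω => propext (h ω)
  rw [this]

theorem Pr_total (n : ℕ) (M : Kernels X Y U) (γ : Strat Y U) (m : ℕ) (B : Traj n X Y → Prop) :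
    Pr n M γ B = ∑ x : X, Pr n M γ (fun ω => stateAt ω m = x ∧ B ω) := by
  unfold Pr
  rw [Finset.sum_comm]
  refine Finset.sum_congr rfl fun ω _ => ?_
  rw [Finset.sum_eq_single (stateAt ω m)]
  · simp
  · intro x _ hx
    rw [if_neg (fun hc => hx hc.1.symm)]
  · simp

theorem common_iff (T : ℕ) (hT : 1 ≤ T) (γ : Strat Y U) (hγ : Admissible T γ) {n : ℕ} (m : ℕ)
    (δy : ℕ → ∀ j, Y j) (δu : ℕ → ∀ j, U j) (ω : Traj n X Y) :
    CommonEq T γ (m + T) δy δu ω ↔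
      ((∀ s, s ≤ m → ω.2 (idx n s) = δy s) ∧ ∀ s, s ≤ m → act γ δy s = δu s) := by
  have hact : (∀ s, s ≤ m → ω.2 (idx n s) = δy s) → ∀ s, s ≤ m → actAt γ ω s = act γ δy s := by
    intro h s hs
    exact act_causal T hT γ hγ _ _ s (fun r hr => h r (by omega))
  constructor
  · rintro ⟨h1, h2⟩
    have h1' : ∀ s, s ≤ m → ω.2 (idx n s) = δy s :=
      fun s hs => funext fun j => h1 s j (by omega)
    refine ⟨h1', fun s hs => ?_⟩
    rw [← hact h1' s hs]
    exact funext fun j => h2 s j (by omega)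
  · rintro ⟨h1, h2⟩
    refine ⟨fun s j hs => congrFun (h1 s (by omega)) j, fun s j hs => ?_⟩
    rw [hact h1 s (by omega), h2 s (by omega)]

/-- Positive probability forces the recorded actions to be those generated by `γ`. -/
theorem cons_of_pos (T : ℕ) (hT : 1 ≤ T) (M : Kernels X Y U) (γ : Strat Y U)
    (hγ : Admissible T γ) (n m : ℕ) (δy : ℕ → ∀ j, Y j) (δu : ℕ → ∀ j, U j)
    (hp : 0 < Pr n M γ (CommonEq T γ (m + T) δy δu)) :
    ∀ s, s ≤ m → act γ δy s = δu s := by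
  by_contra hc
  have : Pr n M γ (CommonEq T γ (m + T) δy δu) = 0 := by
    unfold Pr
    refine Finset.sum_eq_zero fun ω _ => ?_
    rw [if_neg]
    rw [common_iff T hT γ hγ]
    exact fun h => hc h.2
  linarith

theorem Pr_joint (T : ℕ) (hT : 1 ≤ T) (M : Kernels X Y U) (hM : M.IsPMF) (γ : Strat Y U)
    (hγ : Admissible T γ) (n m : ℕ) (hm : m ≤ n) (δy : ℕ → ∀ j, Y j) (δu : ℕ → ∀ j, U j)
    (hc : ∀ s, s ≤ m → act γ δy s = δu s) (x : X) :
    Pr n M γ (fun ω => stateAt ω m = x ∧ CommonEq T γ (m + T) δy δu ω) =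
      alpha M δu δy m x := by
  rw [← alpha_congr M (act γ δy) δu δy m (fun s hs => hc s hs.le),
    ← Pr_ObsEv T hT M hM γ hγ δy n m x hm]
  apply Pr_congr
  intro ω
  rw [common_iff T hT γ hγ]
  unfold ObsEv
  tauto

theorem Pr_common (T : ℕ) (hT : 1 ≤ T) (M : Kernels X Y U) (hM : M.IsPMF) (γ : Strat Y U)
    (hγ : Admissible T γ) (n m : ℕ) (hm : m ≤ n) (δy : ℕ → ∀ j, Y j) (δu : ℕ → ∀ j, U j)
    (hc : ∀ s, s ≤ m → act γ δy s = δu s) :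
    Pr n M γ (CommonEq T γ (m + T) δy δu) = ∑ x, alpha M δu δy m x := by
  rw [Pr_total n M γ m]
  exact Finset.sum_congr rfl fun x _ => Pr_joint T hT M hM γ hγ n m hm δy δu hc x

theorem PiPost_eq (T : ℕ) (hT : 1 ≤ T) (M : Kernels X Y U) (hM : M.IsPMF) (γ : Strat Y U)
    (hγ : Admissible T γ) (n m : ℕ) (hm : m ≤ n) (δy : ℕ → ∀ j, Y j) (δu : ℕ → ∀ j, U j)
    (hc : ∀ s, s ≤ m → act γ δy s = δu s) (x : X) :
    PiPost n T M γ (m + T) δy δu x = alpha M δu δy m x / ∑ z, alpha M δu δy m z := by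
  unfold PiPost condPr
  rw [Pr_common T hT M hM γ hγ n m hm δy δu hc, Nat.add_sub_cancel,
    Pr_joint T hT M hM γ hγ n m hm δy δu hc]

/-- The centralized posterior `Π_t^{(K)}[δ_t^{(K)}](x) = ℙ^{γ^{(K)}}(X_{t-T} = x | Δ_t^{(K)})`
does not depend on the strategy profile (only on the realized data in `δ_t^{(K)}`), its
initial condition is `Π_{T+1}^{(K)} = ℙ(X_1 = · | Y_1^{(K)} = y_1^{(K)})`, and it
satisfies the Markov recursion: `Π_{t+1}^{(K)}[δ_{t+1}^{(K)}](x_{t-T+1})` is the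
normalization over `x_{t-T+1}` of
`Σ_{x_{t-T}} s_{t-T+1}(x_{t-T+1} | x_{t-T}, u_{t-T}^{(K)})
 · Π_{k=1}^K q_{t-T+1}^k(y_{t-T+1}^k | x_{t-T+1}, u_{t-T}^{(K)}) · Π_t^{(K)}[δ_t^{(K)}](x_{t-T})`,
depending only on the actions `u_{t-T}^{(K)}` and the new shared observations
`y_{t-T+1}^{(K)}`, not on the strategies.  (In the 0-based encoding the paper's time
`t ∈ {T+1,…,n}` is `t ∈ {T,…,n-1 }`, `X_{t-T}` has index `t - T`, the action
`u_{t-T}^{(K)}` index `t - T`, and the new observation index `t - T + 1`.) -/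
theorem centralized_posterior_Pi_recursion
    {X : Type} [Fintype X] [DecidableEq X] [Nonempty X]
    {K : ℕ} {Y U : Fin K → Type}
    [∀ k, Fintype (Y k)] [∀ k, DecidableEq (Y k)] [∀ k, Nonempty (Y k)]
    [∀ k, Fintype (U k)] [∀ k, DecidableEq (U k)] [∀ k, Nonempty (U k)]
    (n T : ℕ) (hT : 1 ≤ T) (hTn : T ≤ n)
    (M : Kernels X Y U) (hM : M.IsPMF) :
    -- strategy independence
    (∀ (γ₁ γ₂ : Strat Y U), Admissible T γ₁ → Admissible T γ₂ →
      ∀ (t : ℕ) (δy : ℕ → ∀ j, Y j) (δu : ℕ → ∀ j, U j), T ≤ t → t ≤ n →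
        0 < Pr n M γ₁ (CommonEq T γ₁ t δy δu) →
        0 < Pr n M γ₂ (CommonEq T γ₂ t δy δu) →
        ∀ x : X, PiPost n T M γ₁ t δy δu x = PiPost n T M γ₂ t δy δu x) ∧
    -- initial condition `Π_{T+1}^{(K)} = ℙ(X_1 = · | Y_1^{(K)} = y_1^{(K)})`
    (∀ (γ : Strat Y U), Admissible T γ →
      ∀ (δy : ℕ → ∀ j, Y j) (δu : ℕ → ∀ j, U j),
        0 < Pr n M γ (CommonEq T γ T δy δu) →
        ∀ x : X, PiPost n T M γ T δy δu x =
          condPr n M γ (fun ω => stateAt ω 0 = x)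
            (fun ω => ∀ j : Fin K, obsAt ω 0 j = δy 0 j)) ∧
    -- Markov recursion, driven only by `u_{t-T}^{(K)}` and `y_{t-T+1}^{(K)}`
    (∀ (γ : Strat Y U), Admissible T γ →
      ∀ (t : ℕ) (δy : ℕ → ∀ j, Y j) (δu : ℕ → ∀ j, U j), T ≤ t → t < n →
        0 < Pr n M γ (CommonEq T γ (t + 1) δy δu) →
        ∀ x' : X,
          PiPost n T M γ (t + 1) δy δu x' =
            (∑ x : X, M.trans (t - T) x (δu (t - T)) x' *
                (∏ j, M.obs (t - T) j x' (δu (t - T)) (δy (t - T + 1) j)) *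
                PiPost n T M γ t δy δu x) /
            (∑ x'' : X, ∑ x : X, M.trans (t - T) x (δu (t - T)) x'' *
                (∏ j, M.obs (t - T) j x'' (δu (t - T)) (δy (t - T + 1) j)) *
                PiPost n T M γ t δy δu x)) := by
  refine ⟨?_, ?_, ?_⟩
  · intro γ₁ γ₂ h₁ h₂ t δy δu hTt htn p₁ p₂ x
    obtain ⟨m, rfl⟩ := Nat.exists_eq_add_of_le' hTt
    rw [PiPost_eq T hT M hM γ₁ h₁ n m (by omega) δy δu (cons_of_pos T hT M γ₁ h₁ n m δy δu p₁),
      PiPost_eq T hT M hM γ₂ h₂ n m (by omega) δy δu (cons_of_pos T hT M γ₂ h₂ n m δy δu p₂)]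
  · intro γ hγ δy δu hp x
    have hp' : 0 < Pr n M γ (CommonEq T γ (0 + T) δy δu) := by rwa [Nat.zero_add]
    have h := PiPost_eq T hT M hM γ hγ n 0 (by omega) δy δu
      (cons_of_pos T hT M γ hγ n 0 δy δu hp') x
    rw [Nat.zero_add] at h
    rw [h]
    have hj : ∀ z : X, Pr n M γ (fun ω => stateAt ω 0 = z ∧
        ∀ j : Fin K, obsAt ω 0 j = δy 0 j) = alpha M δu δy 0 z := by
      intro z
      rw [← alpha_congr M (act γ δy) δu δy 0 (fun s hs => absurd hs (Nat.not_lt_zero s)),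
        ← Pr_ObsEv T hT M hM γ hγ δy n 0 z (Nat.zero_le _)]
      apply Pr_congr
      intro ω
      unfold ObsEv obsAt
      refine and_congr Iff.rfl ⟨fun h s hs => ?_, fun h j => congrFun (h 0 le_rfl) j⟩
      obtain rfl : s = 0 := by omega
      exact funext h
    unfold condPr
    rw [hj x, Pr_total n M γ 0 (fun ω => ∀ j : Fin K, obsAt ω 0 j = δy 0 j)]
    simp only [hj]
  · intro γ hγ t δy δu hTt htn hp x'
    obtain ⟨m, rfl⟩ := Nat.exists_eq_add_of_le' hTt
    have e : m + T + 1 = (m + 1) + T := by omega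
    rw [e] at hp ⊢
    have hc := cons_of_pos T hT M γ hγ n (m + 1) δy δu hp
    rw [Pr_common T hT M hM γ hγ n (m + 1) (by omega) δy δu hc] at hp
    rw [PiPost_eq T hT M hM γ hγ n (m + 1) (by omega) δy δu hc, Nat.add_sub_cancel]
    simp only [PiPost_eq T hT M hM γ hγ n m (by omega) δy δu (fun s hs => hc s (by omega))]
    have hS : (∑ z, alpha M δu δy m z) ≠ 0 := by
      intro h0
      rw [Finset.sum_eq_zero_iff_of_nonneg (fun z _ => alpha_nonneg M hM δu δy m z)] at h0
      have : ∑ x, alpha M δu δy (m + 1) x = 0 := by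
        refine Finset.sum_eq_zero fun x _ => Finset.sum_eq_zero fun z hz => ?_
        rw [h0 z hz, mul_zero]
      linarith
    simp only [← mul_div_assoc, ← Finset.sum_div]
    rw [div_div_div_cancel_right₀ hS]
    rfl

end DelayedSharing
end
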